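/- Let t₀ > 0 and let f be a holomorphic function on the polydisc {ψ < −t₀} with Taylor expansion f(w) = Σ_{α ∈ (ℤ_{≥0})ⁿ} b_α w^α. Then limsup_{t→+∞} ∫_{{−t−1 < ψ < −t}} |f|² e^{−ψ} dλ_n < +∞ if and only if b_α = 0 for every α with Σ_{j=1}^n (α_j+1)/p_j < 1; and in that case the limit lim_{t→+∞} ∫_{{−t−1 < ψ < −t}} |f|² e^{−ψ} dλ_n exists and equals Σ_{α : Σ_j (α_j+1)/p_j = 1} |b_α|² πⁿ / Π_{j=1}^n (α_j+1). -/

import Mathlib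

open MeasureTheory Filter

/-- `psi p w = max_j 2 p_j log |w_j|`. -/
noncomputable def psi {n : ℕ} (p : Fin n → ℝ) (w : Fin n → ℂ) : ℝ :=
  ⨆ j, 2 * p j * Real.log ‖w j‖

/-- The polydisc `{ψ < s} = Π_j {|w_j| < e^{s/(2 p_j)}}`. -/
noncomputable def polydisc {n : ℕ} (p : Fin n → ℝ) (s : ℝ) : Set (Fin n → ℂ) :=
  {w | ∀ j, ‖w j‖ < Real.exp (s / (2 * p j))}

/-- `qExp p α = Σ_j (α_j + 1) / p_j`. -/
noncomputable def qExp {n : ℕ} (p : Fin n → ℝ) (α : Fin n → ℕ) : ℝ :=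
  ∑ j, ((α j : ℝ) + 1) / p j


lemma ball_integral (k : ℕ) (r : ℝ) (hr : 0 < r) :
    ∫ z in Metric.ball (0:ℂ) r, ‖z‖ ^ (2 * k) = Real.pi / ((k:ℝ) + 1) * r ^ (2 * k + 2) := by
  have h1 : ∫ z in Metric.ball (0:ℂ) r, ‖z‖ ^ (2 * k)
      = ∫ z : ℂ, (Set.Iio r).indicator (fun y : ℝ => y ^ (2 * k)) ‖z‖ := by
    rw [← integral_indicator Metric.isOpen_ball.measurableSet]
    congr 1
    ext z
    by_cases hz : ‖z‖ < r
    · simp [Set.indicator, hz]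
    · simp [Set.indicator, hz]
  rw [h1, integral_fun_norm_addHaar volume]
  have h2 : ∫ (y : ℝ) in Set.Ioi 0, y ^ (Module.finrank ℝ ℂ - 1) •
      (Set.Iio r).indicator (fun y : ℝ => y ^ (2 * k)) y = r ^ (2 * k + 2) / (2 * k + 2) := by
    have h3 : ∀ y : ℝ, y ^ (Module.finrank ℝ ℂ - 1) •
      (Set.Iio r).indicator (fun y : ℝ => y ^ (2 * k)) y
        = (Set.Iio r).indicator (fun y : ℝ => y ^ (2 * k + 1)) y := by
      intro y
      by_cases hy : y < r
      · simp [Set.indicator, hy, pow_succ, mul_comm]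
      · simp [Set.indicator, hy]
    simp_rw [h3]
    rw [setIntegral_indicator measurableSet_Iio, Set.Ioi_inter_Iio, ← integral_Ioc_eq_integral_Ioo,
      ← intervalIntegral.integral_of_le hr.le, integral_pow]
    simp
    ring
  rw [h2]
  have h4 : volume.real (Metric.ball (0:ℂ) 1) = Real.pi := by
    simp [Measure.real]
  rw [h4]
  simp
  field_simp

lemma polydisc_eq_pi {n : ℕ} (p : Fin n → ℝ) (s : ℝ) :
    polydisc p s = Set.univ.pi fun j => Metric.ball (0:ℂ) (Real.exp (s / (2 * p j))) := by
  ext w; simp [polydisc]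

/-- constant -/
noncomputable def Cst {n : ℕ} (α : Fin n → ℕ) : ℝ := Real.pi ^ n / ∏ j, ((α j : ℝ) + 1)

lemma Cst_pos {n : ℕ} (α : Fin n → ℕ) : 0 < Cst α := by
  unfold Cst
  have : 0 < ∏ j, ((α j : ℝ) + 1) := Finset.prod_pos fun j _ => by positivity
  have := Real.pi_pos
  positivity

lemma polydisc_integral {n : ℕ} (p : Fin n → ℝ) (α : Fin n → ℕ) (s : ℝ) :
    IntegrableOn (fun w : Fin n → ℂ => ∏ j, ‖w j‖ ^ (2 * α j)) (polydisc p s) ∧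
    ∫ w in polydisc p s, ∏ j, ‖w j‖ ^ (2 * α j) = Cst α * Real.exp (s * qExp p α) := by
  rw [polydisc_eq_pi, IntegrableOn, volume_pi, Measure.restrict_pi_pi]
  constructor
  · refine Integrable.fintype_prod (f := fun j (z : ℂ) => ‖z‖ ^ (2 * α j)) fun j => ?_
    have : IntegrableOn (fun z : ℂ => ‖z‖ ^ (2 * α j))
        (Metric.closedBall (0:ℂ) (Real.exp (s / (2 * p j)))) :=
      ContinuousOn.integrableOn_compact (isCompact_closedBall _ _) (by fun_prop)
    exact this.mono_set Metric.ball_subset_closedBall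
  · rw [integral_fintype_prod_eq_prod (𝕜 := ℝ) (fun j (z : ℂ) => ‖z‖ ^ (2 * α j))]
    simp_rw [ball_integral _ _ (Real.exp_pos _)]
    rw [Finset.prod_mul_distrib, Cst, qExp, Finset.mul_sum, Real.exp_sum, Finset.prod_div_distrib]
    simp only [Finset.prod_const, Finset.card_univ, Fintype.card_fin]
    congr 1
    refine Finset.prod_congr rfl fun j _ => ?_
    rw [← Real.exp_nat_mul]
    congr 1
    push_cast
    by_cases hp : p j = 0
    · simp [hp]
    · field_simp

lemma polydisc_lintegral {n : ℕ} (p : Fin n → ℝ) (α : Fin n → ℕ) (s : ℝ) :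
    ∫⁻ w in polydisc p s, ENNReal.ofReal (∏ j, ‖w j‖ ^ (2 * α j))
      = ENNReal.ofReal (Cst α * Real.exp (s * qExp p α)) := by
  obtain ⟨h1, h2⟩ := polydisc_integral p α s
  rw [← h2, ofReal_integral_eq_lintegral_ofReal h1]
  exact ae_of_all _ fun w => Finset.prod_nonneg fun j _ => by positivity

lemma measurable_psi {n : ℕ} (p : Fin n → ℝ) : Measurable (psi p) := by
  unfold psi
  exact Measurable.iSup fun j => by fun_prop

lemma psi_lt_iff {n : ℕ} (hn : 0 < n) (p : Fin n → ℝ) (w : Fin n → ℂ) (c : ℝ) :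
    psi p w < c ↔ ∀ j, 2 * p j * Real.log ‖w j‖ < c := by
  have : Nonempty (Fin n) := ⟨⟨0, hn⟩⟩
  unfold psi
  constructor
  · intro h j
    exact lt_of_le_of_lt (le_ciSup (f := fun j => 2 * p j * Real.log ‖w j‖)
      (Set.finite_range _).bddAbove j) h
  · intro h
    obtain ⟨i, hi⟩ := exists_eq_ciSup_of_finite (f := fun j => 2 * p j * Real.log ‖w j‖)
    rw [← hi]; exact h i

lemma psi_lt_iff_polydisc {n : ℕ} (hn : 0 < n) (p : Fin n → ℝ) (hp : ∀ j, 0 < p j)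
    (w : Fin n → ℂ) (s : ℝ) (hs : 0 ≤ s) :
    psi p w < -s ↔ w ∈ polydisc p (-s) ∧ ∀ j, w j ≠ 0 := by
  rw [psi_lt_iff hn]
  simp only [polydisc, Set.mem_ofPred_eq, ← forall_and]
  refine forall_congr' fun j => ?_
  have hpj := hp j
  by_cases h0 : w j = 0
  · simp [h0]; exact hs
  · have hw : 0 < ‖w j‖ := norm_pos_iff.mpr h0
    rw [← Real.log_lt_iff_lt_exp hw, lt_div_iff₀ (by positivity)]
    simp [h0, mul_comm]

lemma ae_ne_zero {n : ℕ} : ∀ᵐ w : Fin n → ℂ, ∀ j, w j ≠ 0 := by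
  rw [ae_all_iff]
  intro j
  have : (volume : Measure (Fin n → ℂ)) {w | w j = 0} = 0 := by
    have := Measure.pi_hyperplane (fun _ : Fin n => (volume : Measure ℂ)) j 0
    simpa [volume_pi] using this
  rw [ae_iff]
  simpa using this

lemma psi_lintegral {n : ℕ} (hn : 0 < n) (p : Fin n → ℝ) (hp : ∀ j, 0 < p j)
    (α : Fin n → ℕ) (s : ℝ) (hs : 0 ≤ s) :
    ∫⁻ w in {w | psi p w < -s}, ENNReal.ofReal (∏ j, ‖w j‖ ^ (2 * α j))
      = ENNReal.ofReal (Cst α * Real.exp (-s * qExp p α)) := by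
  rw [← polydisc_lintegral]
  refine setLIntegral_congr ?_
  filter_upwards [ae_ne_zero] with w hw
  have := psi_lt_iff_polydisc hn p hp w s hs
  simp only [hw, implies_true, and_true, ne_eq, not_false_eq_true] at this
  exact propext this

lemma qExp_pos {n : ℕ} (hn : 0 < n) (p : Fin n → ℝ) (hp : ∀ j, 0 < p j)
    (α : Fin n → ℕ) : 0 < qExp p α := by
  have : Nonempty (Fin n) := ⟨⟨0, hn⟩⟩
  exact Finset.sum_pos (fun j _ => by have := hp j; positivity) Finset.univ_nonempty

lemma exp_lintegral (C q s : ℝ) (hC : 0 < C) (hq : 0 < q) :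
    ∫⁻ x in Set.Ioi s, ENNReal.ofReal (C * q * Real.exp (-q * x))
      = ENNReal.ofReal (C * Real.exp (-s * q)) := by
  have hi := (integrableOn_exp_mul_Ioi (a := -q) (by linarith) s).const_mul (C * q)
  rw [← ofReal_integral_eq_lintegral_ofReal hi (ae_of_all _ fun x => by
    show 0 ≤ C * q * Real.exp (-q * x); positivity), integral_const_mul,
    integral_exp_mul_Ioi (by linarith)]
  congr 1
  field_simp
  
lemma push_eq {n : ℕ} (hn : 0 < n) (p : Fin n → ℝ) (hp : ∀ j, 0 < p j)
    (α : Fin n → ℕ) :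
    Measure.map (fun w => - psi p w)
      ((volume.withDensity fun w : Fin n → ℂ => ENNReal.ofReal (∏ j, ‖w j‖ ^ (2 * α j))).restrict
        {w | psi p w < 0})
    = (volume.withDensity fun x : ℝ =>
        ENNReal.ofReal (Cst α * qExp p α * Real.exp (-qExp p α * x))).restrict (Set.Ioi 0) := by
  have hm := measurable_psi p
  have hmneg : Measurable (fun w => - psi p w) := hm.neg
  have hq := qExp_pos hn p hp α
  have hC := Cst_pos α
  have key : ∀ s : ℝ, 0 ≤ s →
      (volume.withDensity fun w : Fin n → ℂ => ENNReal.ofReal (∏ j, ‖w j‖ ^ (2 * α j)))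
        {w | psi p w < -s} = (volume.withDensity fun x : ℝ =>
        ENNReal.ofReal (Cst α * qExp p α * Real.exp (-qExp p α * x))) (Set.Ioi s) := by
    intro s hs
    rw [withDensity_apply _ (measurableSet_lt hm measurable_const),
      withDensity_apply _ measurableSet_Ioi, psi_lintegral hn p hp α s hs, exp_lintegral _ _ _ hC hq]
  have hS : ∀ s : ℝ, (Measure.map (fun w => - psi p w)
      ((volume.withDensity fun w : Fin n → ℂ => ENNReal.ofReal (∏ j, ‖w j‖ ^ (2 * α j))).restrict
        {w | psi p w < 0})) (Set.Ioi s) =  ((volume.withDensity fun x : ℝ =>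
        ENNReal.ofReal (Cst α * qExp p α * Real.exp (-qExp p α * x))).restrict (Set.Ioi 0))
          (Set.Ioi s) := by
    intro s
    rw [Measure.map_apply hmneg measurableSet_Ioi,
      Measure.restrict_apply (hmneg measurableSet_Ioi),
      Measure.restrict_apply measurableSet_Ioi, Set.Ioi_inter_Ioi, ← key _ (by simp)]
    congr 1
    ext w
    simp only [Set.mem_inter_iff, Set.mem_preimage, Set.mem_Ioi, Set.mem_ofPred_eq]
    rw [lt_neg, lt_neg (b := (max s 0)), max_lt_iff, lt_neg, lt_neg (a := (0:ℝ)), neg_zero]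
  have hU : (Measure.map (fun w => - psi p w)
      ((volume.withDensity fun w : Fin n → ℂ => ENNReal.ofReal (∏ j, ‖w j‖ ^ (2 * α j))).restrict
        {w | psi p w < 0})) Set.univ =  ((volume.withDensity fun x : ℝ =>
        ENNReal.ofReal (Cst α * qExp p α * Real.exp (-qExp p α * x))).restrict (Set.Ioi 0))
          Set.univ := by
    rw [Measure.map_apply hmneg MeasurableSet.univ]
    simp only [Set.preimage_univ, Measure.restrict_apply_univ]
    simpa using key 0 le_rfl
  have : IsFiniteMeasure (Measure.map (fun w => - psi p w)
      ((volume.withDensity fun w : Fin n → ℂ => ENNReal.ofReal (∏ j, ‖w j‖ ^ (2 * α j))).restrict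
        {w | psi p w < 0})) := by
    constructor
    rw [hU, Measure.restrict_apply_univ, withDensity_apply _ measurableSet_Ioi,
      exp_lintegral _ _ _ hC hq]
    exact ENNReal.ofReal_lt_top
  refine ext_of_generate_finite (Set.range Set.Ioi) ?_ isPiSystem_Ioi ?_ hU
  · rw [← borel_eq_generateFrom_Ioi]; exact BorelSpace.measurable_eq
  · rintro _ ⟨s, rfl⟩; exact hS s

/-- shell -/
def shell {n : ℕ} (p : Fin n → ℝ) (t : ℝ) : Set (Fin n → ℂ) :=
  {w : Fin n → ℂ | -t - 1 < psi p w ∧ psi p w < -t}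

lemma measurableSet_shell {n : ℕ} (p : Fin n → ℝ) (t : ℝ) : MeasurableSet (shell p t) :=
  (measurableSet_lt measurable_const (measurable_psi p)).inter
    (measurableSet_lt (measurable_psi p) measurable_const)

lemma shell_lintegral {n : ℕ} (hn : 0 < n) (p : Fin n → ℝ) (hp : ∀ j, 0 < p j)
    (α : Fin n → ℕ) (t : ℝ) (ht : 0 ≤ t) :
    ∫⁻ w in shell p t, ENNReal.ofReal ((∏ j, ‖w j‖ ^ (2 * α j)) * Real.exp (-psi p w))
      = ENNReal.ofReal (∫ s in t..(t+1),
        Cst α * qExp p α * Real.exp ((1 - qExp p α) * s)) := by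
  have hm := measurable_psi p
  have hmneg : Measurable (fun w => - psi p w) := hm.neg
  have hq := qExp_pos hn p hp α
  have hC := Cst_pos α
  have hW : Measurable fun w : Fin n → ℂ => ENNReal.ofReal (∏ j, ‖w j‖ ^ (2 * α j)) := by fun_prop
  have h1 := congrArg (fun μ => ∫⁻ s in Set.Ioo t (t+1), ENNReal.ofReal (Real.exp s) ∂μ)
    (push_eq hn p hp α)
  rw [Measure.restrict_map hmneg measurableSet_Ioo, lintegral_map (by fun_prop) hmneg,
    Measure.restrict_restrict (hmneg measurableSet_Ioo),
    Measure.restrict_restrict measurableSet_Ioo] at h1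
  have e1 : ((fun w => - psi p w) ⁻¹' Set.Ioo t (t+1)) ∩ {w | psi p w < 0} = shell p t := by
    ext w
    simp only [Set.mem_inter_iff, Set.mem_preimage, Set.mem_Ioo, Set.mem_ofPred_eq, shell]
    constructor
    · rintro ⟨⟨h, h2⟩, _⟩; constructor <;> linarith
    · rintro ⟨h, h2⟩; refine ⟨⟨?_, ?_⟩, ?_⟩ <;> linarith
  have e2 : Set.Ioo t (t+1) ∩ Set.Ioi 0 = Set.Ioo t (t+1) := by
    refine Set.inter_eq_left.mpr fun x hx => lt_of_le_of_lt ht hx.1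
  rw [e1, e2, setLIntegral_withDensity_eq_setLIntegral_mul _ hW (by fun_prop)
    (measurableSet_shell p t), setLIntegral_withDensity_eq_setLIntegral_mul _ (by fun_prop)
    (by fun_prop) measurableSet_Ioo] at h1
  have e3 : ∫⁻ w in shell p t, ENNReal.ofReal ((∏ j, ‖w j‖ ^ (2 * α j)) * Real.exp (-psi p w))
    = ∫⁻ w in shell p t, ((fun w : Fin n → ℂ => ENNReal.ofReal (∏ j, ‖w j‖ ^ (2 * α j))) *
      fun w => ENNReal.ofReal (Real.exp (-psi p w))) w := by
    refine lintegral_congr fun w => ?_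
    rw [ENNReal.ofReal_mul (Finset.prod_nonneg fun j _ => by positivity)]
    rfl
  rw [e3, h1, intervalIntegral.integral_of_le (by linarith), integral_Ioc_eq_integral_Ioo,
    ofReal_integral_eq_lintegral_ofReal]
  · refine lintegral_congr fun x => ?_
    simp only [Pi.mul_apply]
    rw [← ENNReal.ofReal_mul (by positivity), mul_assoc, ← Real.exp_add]
    congr 3; ring
  · exact (Continuous.integrableOn_Icc (by fun_prop)).mono_set Set.Ioo_subset_Icc_self
  · exact ae_of_all _ fun x => by positivity

open scoped ComplexConjugate in
lemma parseval_offdiag {n : ℕ} (h : (Fin n → ℂ) → ℝ)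
    (hinv : ∀ c : Fin n → Circle, ∀ w, h (fun j => (c j : ℂ) * w j) = h w)
    (α β : Fin n → ℕ) (hne : α ≠ β) (a b : ℂ) :
    ∫ w, (a * ∏ j, w j ^ α j) * conj (b * ∏ j, w j ^ β j) * (h w : ℂ) = 0 := by
  obtain ⟨j, hj⟩ := Function.ne_iff.mp hne
  set ζ : Circle := Circle.exp (Real.pi / ((α j : ℝ) - β j)) with hζ
  set c : Fin n → Circle := fun i => if i = j then ζ else 1 with hc
  have hmp : MeasurePreserving (fun (w : Fin n → ℂ) i => (c i : ℂ) * w i) volume volume := by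
    refine volume_preserving_pi (f := fun i (z : ℂ) => (c i : ℂ) * z) fun i => ?_
    have := (rotation (c i)).measurePreserving
    exact this
  have hemb : MeasurableEmbedding (fun (w : Fin n → ℂ) i => (c i : ℂ) * w i) := by
    let e : (Fin n → ℂ) ≃ₜ (Fin n → ℂ) :=
      Homeomorph.piCongrRight fun i => (rotation (c i)).toHomeomorph
    exact e.measurableEmbedding
  have hd : ((α j : ℝ) - β j) ≠ 0 := by
    rw [sub_ne_zero]; exact_mod_cast hj
  have hζ1 : (ζ : ℂ) ^ α j * conj (ζ : ℂ) ^ β j = -1 := by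
    rw [hζ, Circle.coe_exp, ← Complex.exp_conj, ← Complex.exp_nat_mul, ← Complex.exp_nat_mul,
      ← Complex.exp_add, ← Complex.exp_pi_mul_I]
    congr 1
    simp only [map_mul, Complex.conj_ofReal, Complex.conj_I]
    have hd' : ((α j : ℂ) - β j) ≠ 0 := by exact_mod_cast hd
    push_cast
    field_simp
    ring
  have hprod : (∏ i, (c i : ℂ) ^ α i) * conj (∏ i, (c i : ℂ) ^ β i) = -1 := by
    rw [map_prod, ← Finset.prod_mul_distrib, ← hζ1, Finset.prod_eq_single j]
    · simp [hc]
    · intro i _ hi; simp [hc, hi]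
    · simp
  have key := hmp.integral_comp hemb
    (fun w => (a * ∏ j, w j ^ α j) * conj (b * ∏ j, w j ^ β j) * (h w : ℂ))
  have e : ∀ w : Fin n → ℂ, (a * ∏ i, ((c i : ℂ) * w i) ^ α i) *
      conj (b * ∏ i, ((c i : ℂ) * w i) ^ β i) * (h (fun i => (c i : ℂ) * w i) : ℂ)
      = - ((a * ∏ j, w j ^ α j) * conj (b * ∏ j, w j ^ β j) * (h w : ℂ)) := by
    intro w
    rw [hinv]
    simp only [mul_pow, Finset.prod_mul_distrib, map_mul]
    linear_combination (a * (∏ j, w j ^ α j) * conj b * conj (∏ j, w j ^ β j) * (h w : ℂ)) * hprod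
  simp only [e, integral_neg] at key
  exact self_eq_neg.mp key.symm

open scoped ComplexConjugate in
lemma hasSum_mul_conj {ι : Type*} (g : ι → ℂ) (z : ℂ) (hn : Summable fun i => ‖g i‖)
    (hg : HasSum g z) :
    HasSum (fun x : ι × ι => g x.1 * conj (g x.2)) ((‖z‖ ^ 2 : ℝ) : ℂ) := by
  have hc : HasSum (fun i => conj (g i)) (conj z) := hg.map (starRingEnd ℂ) Complex.continuous_conj
  have hn2 : Summable fun i => ‖conj (g i)‖ := by simpa only [RCLike.norm_conj] using hn
  have hp : Summable fun x : ι × ι => g x.1 * conj (g x.2) :=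
    summable_mul_of_summable_norm (f := g) (g := fun i => conj (g i)) hn hn2
  have hm : HasSum (fun x : ι × ι => g x.1 * conj (g x.2)) (z * conj z) :=
    HasSum.mul (f := g) (g := fun i => conj (g i)) hg hc hp
  have e : z * conj z = ((‖z‖ ^ 2 : ℝ) : ℂ) := by rw [Complex.mul_conj, Complex.normSq_eq_norm_sq]
  rw [e] at hm
  exact hm

set_option maxHeartbeats 2000000 in
open scoped ComplexConjugate in
lemma parseval {n : ℕ} (h : (Fin n → ℂ) → ℝ) (hh : Integrable h) (h0 : ∀ w, 0 ≤ h w)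
    (hinv : ∀ c : Fin n → Circle, ∀ w, h (fun j => (c j : ℂ) * w j) = h w)
    (R : Fin n → ℝ) (hR : ∀ w, h w ≠ 0 → ∀ j, ‖w j‖ ≤ R j) (hR0 : ∀ j, 0 ≤ R j)
    (f : (Fin n → ℂ) → ℂ) (b : (Fin n → ℕ) → ℂ)
    (hs : Summable fun α : Fin n → ℕ => ‖b α‖ * ∏ j, R j ^ α j)
    (hf : ∀ w, h w ≠ 0 → HasSum (fun α : Fin n → ℕ => b α * ∏ j, (w j) ^ (α j)) (f w)) :
    HasSum (fun α : Fin n → ℕ => ‖b α‖ ^ 2 * ∫ w, (∏ j, ‖w j‖ ^ (2 * α j)) * h w)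
      (∫ w, ‖f w‖ ^ 2 * h w) := by
  set K : (Fin n → ℕ) → ℝ := fun α => ‖b α‖ * ∏ j, R j ^ α j with hK
  have hK0 : ∀ α, 0 ≤ K α := fun α =>
    mul_nonneg (norm_nonneg _) (Finset.prod_nonneg fun j _ => pow_nonneg (hR0 j) _)
  set F : (Fin n → ℕ) × (Fin n → ℕ) → (Fin n → ℂ) → ℂ := fun x w =>
    (b x.1 * ∏ j, w j ^ x.1 j) * conj (b x.2 * ∏ j, w j ^ x.2 j) * (h w : ℂ) with hF
  have hterm : ∀ w, h w ≠ 0 → ∀ α : Fin n → ℕ, ‖b α * ∏ j, w j ^ α j‖ ≤ K α := by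
    intro w hw α
    rw [norm_mul, norm_prod]
    refine mul_le_mul_of_nonneg_left (Finset.prod_le_prod (fun j _ => norm_nonneg _) fun j _ => ?_)
      (norm_nonneg _)
    rw [norm_pow]
    exact pow_le_pow_left₀ (norm_nonneg _) (hR w hw j) _
  have hFb : ∀ x w, ‖F x w‖ ≤ K x.1 * K x.2 * h w := by
    intro x w
    by_cases hw : h w = 0
    · simp [hF, hw]
    · rw [hF]
      simp only
      rw [norm_mul, norm_mul, RCLike.norm_conj, Complex.norm_real, Real.norm_of_nonneg (h0 w)]
      gcongr
      · exact h0 w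
      · exact hK0 _
      · exact hterm w hw _
      · exact hterm w hw _
  have hKK : Summable fun x : (Fin n → ℕ) × (Fin n → ℕ) => K x.1 * K x.2 :=
    hs.mul_of_nonneg hs hK0 hK0
  have hpt : ∀ w, HasSum (fun x => F x w) ((‖f w‖ ^ 2 * h w : ℝ) : ℂ) := by
    intro w
    by_cases hw : h w = 0
    · simp [hF, hw, hasSum_zero]
    · have hn1 : Summable fun α : Fin n → ℕ => ‖b α * ∏ j, w j ^ α j‖ :=
        hs.of_nonneg_of_le (fun _ => norm_nonneg _) (hterm w hw)
      have := (hasSum_mul_conj _ _ hn1 (hf w hw)).mul_right (h w : ℂ)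
      rw [← Complex.ofReal_mul] at this
      exact this
  have hFi : ∀ x, Integrable (F x) := by
    intro x
    refine (hh.const_mul (K x.1 * K x.2)).mono' ?_ (ae_of_all _ (hFb x))
    have m1 : AEStronglyMeasurable (fun w : Fin n → ℂ =>
        (b x.1 * ∏ j, w j ^ x.1 j) * conj (b x.2 * ∏ j, w j ^ x.2 j)) volume := by
      apply Continuous.aestronglyMeasurable
      have c1 : ∀ γ : Fin n → ℕ, Continuous fun w : Fin n → ℂ => b γ * ∏ j, w j ^ γ j :=
        fun γ => by fun_prop
      exact (c1 x.1).mul (Complex.continuous_conj.comp (c1 x.2))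
    have m2 : AEStronglyMeasurable (fun w : Fin n → ℂ => (h w : ℂ)) volume :=
      Complex.continuous_ofReal.comp_aestronglyMeasurable hh.aestronglyMeasurable
    exact m1.mul m2
  have hsum : Summable fun x => ∫ w, ‖F x w‖ := by
    refine (hKK.mul_right (∫ w, h w)).of_nonneg_of_le
      (fun x => integral_nonneg fun w => norm_nonneg _) fun x => ?_
    rw [← integral_const_mul]
    exact integral_mono (hFi x).norm (hh.const_mul _) (hFb x)
  have hH := hasSum_integral_of_summable_integral_norm hFi hsum
  simp only [(hpt _).tsum_eq] at hH
  rw [integral_complex_ofReal] at hH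
  have hinj : Function.Injective (fun α : Fin n → ℕ => (α, α)) := fun a b hab =>
    (Prod.mk.inj hab).1
  rw [← hinj.hasSum_iff] at hH
  · rw [← Complex.hasSum_ofReal]
    suffices hfun : (fun α : Fin n → ℕ =>
        ((‖b α‖ ^ 2 * ∫ w, (∏ j, ‖w j‖ ^ (2 * α j)) * h w : ℝ) : ℂ))
        = (fun x => ∫ w, F x w) ∘ fun α => (α, α) by
      rw [hfun]; exact hH
    funext α
    simp only [Function.comp_apply]
    rw [← integral_const_mul, ← integral_complex_ofReal]
    congr 1
    ext w
    simp only [hF]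
    rw [RCLike.mul_conj, norm_mul, norm_prod]
    simp only [norm_pow]
    push_cast
    rw [mul_pow, ← Finset.prod_pow, mul_assoc]
    simp only [← pow_mul, mul_comm 2]
    rfl
  · rintro ⟨α, β⟩ hx
    refine parseval_offdiag h hinv α β ?_ _ _
    rintro rfl
    exact hx ⟨α, rfl⟩

/-- weight -/
noncomputable def hw {n : ℕ} (p : Fin n → ℝ) (t : ℝ) : (Fin n → ℂ) → ℝ :=
  (shell p t).indicator fun w => Real.exp (-psi p w)

lemma hw_nonneg {n : ℕ} (p : Fin n → ℝ) (t : ℝ) (w : Fin n → ℂ) : 0 ≤ hw p t w :=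
  Set.indicator_nonneg (fun _ _ => (Real.exp_pos _).le) _

lemma hw_integrable {n : ℕ} (hn : 0 < n) (p : Fin n → ℝ) (hp : ∀ j, 0 < p j)
    (t : ℝ) (ht : 0 ≤ t) : Integrable (hw p t) := by
  rw [hw, integrable_indicator_iff (measurableSet_shell p t)]
  have hvol : volume (shell p t) < ⊤ := by
    have h1 : shell p t ⊆ polydisc p (-t) := fun w hw =>
      ((psi_lt_iff_polydisc hn p hp w t ht).mp hw.2).1
    refine lt_of_le_of_lt (measure_mono h1) ?_
    have h2 := polydisc_lintegral p (fun _ => 0) (-t)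
    simp only [mul_zero, pow_zero, Finset.prod_const_one, ENNReal.ofReal_one, lintegral_const,
      one_mul, Measure.restrict_apply_univ] at h2
    rw [h2]; exact ENNReal.ofReal_lt_top
  have hm : Measurable fun w => Real.exp (-psi p w) := (measurable_psi p).neg.exp
  refine Measure.integrableOn_of_bounded (M := Real.exp (t+1)) hvol.ne hm.aestronglyMeasurable ?_
  rw [ae_restrict_iff' (measurableSet_shell p t)]
  refine ae_of_all _ fun w hw => ?_
  rw [Real.norm_of_nonneg (Real.exp_pos _).le]
  have := hw.1
  exact Real.exp_le_exp.mpr (by linarith)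

lemma psi_rot {n : ℕ} (p : Fin n → ℝ) (c : Fin n → Circle) (w : Fin n → ℂ) :
    psi p (fun j => (c j : ℂ) * w j) = psi p w := by
  simp only [psi, norm_mul, Circle.norm_coe, one_mul]

lemma hw_rot {n : ℕ} (p : Fin n → ℝ) (t : ℝ) (c : Fin n → Circle) (w : Fin n → ℂ) :
    hw p t (fun j => (c j : ℂ) * w j) = hw p t w := by
  have h : (fun j => (c j : ℂ) * w j) ∈ shell p t ↔ w ∈ shell p t := by
    simp only [shell, Set.mem_ofPred_eq, psi_rot]
  by_cases hs : w ∈ shell p t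
  · rw [hw, Set.indicator_of_mem hs, Set.indicator_of_mem (h.mpr hs), psi_rot]
  · rw [hw, Set.indicator_of_notMem hs, Set.indicator_of_notMem (fun h2 => hs (h.mp h2))]

lemma hw_ne {n : ℕ} (p : Fin n → ℝ) (t : ℝ) (w : Fin n → ℂ) (h : hw p t w ≠ 0) :
    w ∈ shell p t := Set.mem_of_indicator_ne_zero h

lemma mul_hw {n : ℕ} (p : Fin n → ℝ) (t : ℝ) (g : (Fin n → ℂ) → ℝ) :
    (fun w => g w * hw p t w) = (shell p t).indicator fun w => g w * Real.exp (-psi p w) := by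
  ext w
  by_cases h : w ∈ shell p t <;> simp [hw, h]

/-- coefficient -/
noncomputable def Dst {n : ℕ} (p : Fin n → ℝ) (α : Fin n → ℕ) (t : ℝ) : ℝ :=
  ∫ s in t..(t+1), Cst α * qExp p α * Real.exp ((1 - qExp p α) * s)

lemma Dst_nonneg {n : ℕ} (hn : 0 < n) (p : Fin n → ℝ) (hp : ∀ j, 0 < p j)
    (α : Fin n → ℕ) (t : ℝ) : 0 ≤ Dst p α t := by
  have hq := qExp_pos hn p hp α
  have hC := Cst_pos α
  exact intervalIntegral.integral_nonneg (by linarith) fun x _ => by positivity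

lemma diag_integral {n : ℕ} (hn : 0 < n) (p : Fin n → ℝ) (hp : ∀ j, 0 < p j)
    (α : Fin n → ℕ) (t : ℝ) (ht : 0 ≤ t) :
    ∫ w, (∏ j, ‖w j‖ ^ (2 * α j)) * hw p t w = Dst p α t := by
  rw [mul_hw p t (fun w => ∏ j, ‖w j‖ ^ (2 * α j)), integral_indicator (measurableSet_shell p t),
    integral_eq_lintegral_of_nonneg_ae, shell_lintegral hn p hp α t ht, ENNReal.toReal_ofReal]
  · rfl
  · exact Dst_nonneg hn p hp α t
  · exact ae_of_all _ fun w =>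
      mul_nonneg (Finset.prod_nonneg fun j _ => by positivity) (Real.exp_pos _).le
  · have hm : Measurable fun w => Real.exp (-psi p w) := (measurable_psi p).neg.exp
    have : Measurable fun w : Fin n → ℂ => ∏ j, ‖w j‖ ^ (2 * α j) := by fun_prop
    exact (this.mul hm).aestronglyMeasurable

/-- radius -/
noncomputable def Rad {n : ℕ} (p : Fin n → ℝ) (T : ℝ) (j : Fin n) : ℝ :=
  Real.exp (-T / (2 * p j))

lemma Rad_pos {n : ℕ} (p : Fin n → ℝ) (T : ℝ) (j : Fin n) : 0 < Rad p T j := Real.exp_pos _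

lemma summable_K {n : ℕ} (p : Fin n → ℝ) (hp : ∀ j, 0 < p j)
    (t₀ T : ℝ) (hT : t₀ < T) (f : (Fin n → ℂ) → ℂ) (b : (Fin n → ℕ) → ℂ)
    (hTaylor : ∀ w ∈ polydisc p (-t₀),
      HasSum (fun α : Fin n → ℕ => b α * ∏ j, (w j) ^ (α j)) (f w)) :
    Summable fun α : Fin n → ℕ => ‖b α‖ * ∏ j, Rad p T j ^ α j := by
  have hmem : (fun j => (Rad p T j : ℂ)) ∈ polydisc p (-t₀) := by
    intro j
    have := hp j
    rw [Complex.norm_real, Real.norm_of_nonneg (Rad_pos p T j).le, Rad, Real.exp_lt_exp]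
    gcongr
  have := (hTaylor _ hmem).summable.norm
  refine this.congr fun α => ?_
  rw [norm_mul, norm_prod]
  congr 1
  refine Finset.prod_congr rfl fun j _ => ?_
  rw [norm_pow, Complex.norm_real, Real.norm_of_nonneg (Rad_pos p T j).le]

lemma shell_sum {n : ℕ} (hn : 0 < n) (p : Fin n → ℝ) (hp : ∀ j, 0 < p j)
    (t₀ T t : ℝ) (ht₀ : 0 < t₀) (hT : t₀ < T) (htT : T ≤ t)
    (f : (Fin n → ℂ) → ℂ) (b : (Fin n → ℕ) → ℂ)
    (hf : DifferentiableOn ℂ f (polydisc p (-t₀)))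
    (hTaylor : ∀ w ∈ polydisc p (-t₀),
      HasSum (fun α : Fin n → ℕ => b α * ∏ j, (w j) ^ (α j)) (f w)) :
    ∃ S : ℝ, HasSum (fun α : Fin n → ℕ => ‖b α‖ ^ 2 * Dst p α t) S ∧
      ∫⁻ w in shell p t, ENNReal.ofReal (‖f w‖ ^ 2 * Real.exp (-psi p w)) = ENNReal.ofReal S := by
  have ht : 0 ≤ t := by linarith
  have hsub : ∀ w ∈ shell p t, w ∈ polydisc p (-T) := fun w hw j => by
    have h1 := ((psi_lt_iff_polydisc hn p hp w t ht).mp hw.2).1 j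
    refine lt_of_lt_of_le h1 (Real.exp_le_exp.mpr ?_)
    have := hp j
    gcongr
  have hsub0 : ∀ w ∈ shell p t, w ∈ polydisc p (-t₀) := fun w hw j => by
    refine lt_of_lt_of_le (hsub w hw j) (Real.exp_le_exp.mpr ?_)
    have := hp j
    gcongr
  have hK := summable_K p hp t₀ T hT f b hTaylor
  have hi := hw_integrable hn p hp t ht
  have hRw : ∀ w, hw p t w ≠ 0 → ∀ j, ‖w j‖ ≤ Rad p T j := fun w hw j =>
    (hsub w (hw_ne p t w hw) j).le
  have hP := parseval (hw p t) hi (hw_nonneg p t) (hw_rot p t)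
    (Rad p T) hRw (fun j => (Real.exp_pos _).le) f b hK
    (fun w hw => hTaylor w (hsub0 w (hw_ne p t w hw)))
  simp only [diag_integral hn p hp _ t ht] at hP
  refine ⟨_, hP, ?_⟩
  rw [mul_hw p t (fun w => ‖f w‖ ^ 2), integral_indicator (measurableSet_shell p t),
    ofReal_integral_eq_lintegral_ofReal]
  · change IntegrableOn _ _ _
    rw [← integrable_indicator_iff (measurableSet_shell p t), ← mul_hw p t (fun w => ‖f w‖ ^ 2)]
    refine (hi.const_mul ((∑' α : Fin n → ℕ, ‖b α‖ * ∏ j, Rad p T j ^ α j) ^ 2)).mono' ?_ ?_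
    · rw [mul_hw p t (fun w => ‖f w‖ ^ 2),
        aestronglyMeasurable_indicator_iff (measurableSet_shell p t)]
      refine AEStronglyMeasurable.mul ?_ (measurable_psi p).neg.exp.aestronglyMeasurable
      have hc : ContinuousOn f (shell p t) := hf.continuousOn.mono hsub0
      exact (hc.norm.pow 2).aestronglyMeasurable (measurableSet_shell p t)
    · refine ae_of_all _ fun w => ?_
      rw [norm_mul, Real.norm_of_nonneg (hw_nonneg p t w), norm_pow, norm_norm]
      by_cases h0 : hw p t w = 0
      · simp [h0]
      refine mul_le_mul_of_nonneg_right (pow_le_pow_left₀ (norm_nonneg _) ?_ 2) (hw_nonneg p t w)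
      rw [← (hTaylor w (hsub0 w (hw_ne p t w h0))).tsum_eq]
      refine tsum_of_norm_bounded hK.hasSum fun α => ?_
      rw [norm_mul, norm_prod]
      refine mul_le_mul_of_nonneg_left (Finset.prod_le_prod (fun j _ => norm_nonneg _) fun j _ => ?_)
        (norm_nonneg _)
      rw [norm_pow]
      exact pow_le_pow_left₀ (norm_nonneg _) (hRw w h0 j) _
  · exact ae_of_all _ fun w => by positivity

lemma Dst_eq_one {n : ℕ} (p : Fin n → ℝ) (α : Fin n → ℕ) (t : ℝ) (h : qExp p α = 1) :
    Dst p α t = Cst α := by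
  simp [Dst, h]

lemma Dst_ge {n : ℕ} (hn : 0 < n) (p : Fin n → ℝ) (hp : ∀ j, 0 < p j)
    (α : Fin n → ℕ) (t : ℝ) (h : qExp p α ≤ 1) :
    Cst α * qExp p α * Real.exp ((1 - qExp p α) * t) ≤ Dst p α t := by
  have hq := qExp_pos hn p hp α
  have hC := Cst_pos α
  have : ∫ s in t..(t+1), Cst α * qExp p α * Real.exp ((1 - qExp p α) * t) ≤ Dst p α t := by
    refine intervalIntegral.integral_mono_on (by linarith)
      (by simp) (Continuous.intervalIntegrable (by fun_prop) _ _) fun x hx => ?_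
    have h1 : 0 ≤ 1 - qExp p α := by linarith
    have := hx.1
    gcongr
  simpa using this

lemma Dst_le {n : ℕ} (hn : 0 < n) (p : Fin n → ℝ) (hp : ∀ j, 0 < p j)
    (α : Fin n → ℕ) (t : ℝ) (h : 1 ≤ qExp p α) :
    Dst p α t ≤ Cst α * qExp p α * Real.exp ((1 - qExp p α) * t) := by
  have hq := qExp_pos hn p hp α
  have hC := Cst_pos α
  have : Dst p α t ≤ ∫ s in t..(t+1), Cst α * qExp p α * Real.exp ((1 - qExp p α) * t) := by
    refine intervalIntegral.integral_mono_on (by linarith)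
      (Continuous.intervalIntegrable (by fun_prop) _ _) (by simp) fun x hx => ?_
    have h1 : 1 - qExp p α ≤ 0 := by linarith
    have := mul_le_mul_of_nonpos_left hx.1 h1
    gcongr
  simpa using this

lemma Cst_mul_q_le {n : ℕ} (p : Fin n → ℝ) (hp : ∀ j, 0 < p j) (α : Fin n → ℕ) :
    Cst α * qExp p α ≤ Real.pi ^ n * ∑ j, 1 / p j := by
  have hP : 0 < ∏ j, ((α j : ℝ) + 1) := Finset.prod_pos fun j _ => by positivity
  rw [Cst, div_mul_eq_mul_div, div_le_iff₀ hP, mul_assoc]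
  have := Real.pi_pos
  refine mul_le_mul_of_nonneg_left ?_ (by positivity)
  rw [qExp, Finset.sum_mul]
  refine Finset.sum_le_sum fun j _ => ?_
  have hj := hp j
  have h1 : ((α j : ℝ) + 1) ≤ ∏ j, ((α j : ℝ) + 1) :=
    by
    rw [← Finset.mul_prod_erase _ _ (Finset.mem_univ j)]
    have h2 : 1 ≤ ∏ x ∈ Finset.univ.erase j, ((α x : ℝ) + 1) :=
      Finset.prod_induction _ (fun x : ℝ => 1 ≤ x) (fun a b ha hb => one_le_mul_of_one_le_of_one_le ha hb)
        le_rfl (fun i _ => by simp)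
    exact le_mul_of_one_le_right (by positivity) h2
  rw [div_mul_eq_mul_div, one_mul]
  gcongr

lemma exp_q_le {n : ℕ} (p : Fin n → ℝ) (hp : ∀ j, 0 < p j) (α : Fin n → ℕ) (T : ℝ) (hT : 0 < T) :
    Real.exp (-qExp p α * T) ≤ (∏ j, Rad p T j ^ α j) ^ 2 := by
  rw [qExp, neg_mul, Finset.sum_mul, ← Finset.sum_neg_distrib, Real.exp_sum, ← Finset.prod_pow]
  refine Finset.prod_le_prod (fun _ _ => (Real.exp_pos _).le) fun j _ => ?_
  rw [Rad, ← Real.exp_nat_mul, ← Real.exp_nat_mul, Real.exp_le_exp]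
  have hj := hp j
  push_cast
  have : 0 < T / p j := by positivity
  have e : (2:ℝ) * (α j * (-T / (2 * p j))) = - (α j * (T / p j)) := by field_simp
  have e2 : ((α j : ℝ) + 1) / p j * T = α j * (T / p j) + T / p j := by field_simp
  rw [e, e2]
  linarith

lemma tendsto_D {n : ℕ} (hn : 0 < n) (p : Fin n → ℝ) (hp : ∀ j, 0 < p j)
    (α : Fin n → ℕ) (h : 1 < qExp p α) : Tendsto (Dst p α) atTop (nhds 0) := by
  refine squeeze_zero (fun t => Dst_nonneg hn p hp α t) (fun t => Dst_le hn p hp α t h.le) ?_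
  have : Tendsto (fun t => (1 - qExp p α) * t) atTop atBot :=
    tendsto_id.const_mul_atTop_of_neg (by linarith)
  simpa using (Real.tendsto_exp_atBot.comp this).const_mul (Cst α * qExp p α)

lemma tendsto_D_top {n : ℕ} (hn : 0 < n) (p : Fin n → ℝ) (hp : ∀ j, 0 < p j)
    (α : Fin n → ℕ) (h : qExp p α < 1) : Tendsto (Dst p α) atTop atTop := by
  refine tendsto_atTop_mono (fun t => Dst_ge hn p hp α t h.le) ?_
  have : Tendsto (fun t => (1 - qExp p α) * t) atTop atTop :=
    tendsto_id.const_mul_atTop (by linarith)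
  exact (Real.tendsto_exp_atTop.comp this).const_mul_atTop
    (mul_pos (Cst_pos α) (qExp_pos hn p hp α))

theorem stmt_5 (n : ℕ) (hn : 0 < n) (p : Fin n → ℝ) (hp : ∀ j, 0 < p j)
    (t₀ : ℝ) (ht₀ : 0 < t₀) (f : (Fin n → ℂ) → ℂ) (b : (Fin n → ℕ) → ℂ)
    (hf : DifferentiableOn ℂ f (polydisc p (-t₀)))
    (hTaylor : ∀ w ∈ polydisc p (-t₀),
      HasSum (fun α : Fin n → ℕ => b α * ∏ j, (w j) ^ (α j)) (f w)) :
    (Filter.limsup (fun t : ℝ =>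
        ∫⁻ w in {w : Fin n → ℂ | -t - 1 < psi p w ∧ psi p w < -t},
          ENNReal.ofReal (‖f w‖ ^ 2 * Real.exp (-psi p w))) Filter.atTop < ⊤
      ↔ ∀ α : Fin n → ℕ, qExp p α < 1 → b α = 0) ∧
    ((∀ α : Fin n → ℕ, qExp p α < 1 → b α = 0) →
      Filter.Tendsto (fun t : ℝ =>
          ∫⁻ w in {w : Fin n → ℂ | -t - 1 < psi p w ∧ psi p w < -t},
            ENNReal.ofReal (‖f w‖ ^ 2 * Real.exp (-psi p w))) Filter.atTop
        (nhds (∑' α : {α : Fin n → ℕ // qExp p α = 1},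
          ENNReal.ofReal (‖b α.1‖ ^ 2 * Real.pi ^ n / ∏ j, ((α.1 j : ℝ) + 1))))) := by
  have hS := fun t (ht : t₀ + 1 ≤ t) =>
    shell_sum hn p hp t₀ (t₀ + 1) t ht₀ (by linarith) ht f b hf hTaylor
  have hK := summable_K p hp t₀ (t₀ + 1) (by linarith) f b hTaylor
  change (Filter.limsup (fun t : ℝ => ∫⁻ w in shell p t,
          ENNReal.ofReal (‖f w‖ ^ 2 * Real.exp (-psi p w))) Filter.atTop < ⊤
      ↔ ∀ α : Fin n → ℕ, qExp p α < 1 → b α = 0) ∧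
    ((∀ α : Fin n → ℕ, qExp p α < 1 → b α = 0) →
      Filter.Tendsto (fun t : ℝ => ∫⁻ w in shell p t,
            ENNReal.ofReal (‖f w‖ ^ 2 * Real.exp (-psi p w))) Filter.atTop
        (nhds (∑' α : {α : Fin n → ℕ // qExp p α = 1},
          ENNReal.ofReal (‖b α.1‖ ^ 2 * Real.pi ^ n / ∏ j, ((α.1 j : ℝ) + 1)))))
  have hmain : (∀ α : Fin n → ℕ, qExp p α < 1 → b α = 0) →
      (∑' α : {α : Fin n → ℕ // qExp p α = 1},
          ENNReal.ofReal (‖b α.1‖ ^ 2 * Real.pi ^ n / ∏ j, ((α.1 j : ℝ) + 1))) < ⊤ ∧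
      Filter.Tendsto (fun t : ℝ => ∫⁻ w in shell p t,
            ENNReal.ofReal (‖f w‖ ^ 2 * Real.exp (-psi p w))) Filter.atTop
        (nhds (∑' α : {α : Fin n → ℕ // qExp p α = 1},
          ENNReal.ofReal (‖b α.1‖ ^ 2 * Real.pi ^ n / ∏ j, ((α.1 j : ℝ) + 1)))) := by
    intro hb
    set T := t₀ + 1 with hT
    set B : (Fin n → ℕ) → ℝ := fun α => Real.pi ^ n * (∑ j, 1 / p j) * Real.exp T *
      (‖b α‖ * ∏ j, Rad p T j ^ α j) ^ 2 with hB
    have hB_sum : Summable B := by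
      refine Summable.mul_left _ ?_
      have h2 := hK.mul_of_nonneg hK
        (fun α => mul_nonneg (norm_nonneg _) (Finset.prod_nonneg fun j _ =>
          pow_nonneg (Real.exp_pos _).le _))
        (fun α => mul_nonneg (norm_nonneg _) (Finset.prod_nonneg fun j _ =>
          pow_nonneg (Real.exp_pos _).le _))
      have hinj : Function.Injective (fun α : Fin n → ℕ => (α, α)) := fun a b hab =>
        (Prod.mk.inj hab).1
      refine (h2.comp_injective hinj).congr fun α => ?_
      simp only [Function.comp, sq]
    have hbound : ∀ t, T ≤ t → ∀ α, ‖b α‖ ^ 2 * Dst p α t ≤ B α := by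
      intro t ht α
      rcases lt_or_ge (qExp p α) 1 with h | h
      · rw [hb α h]; simp [hB, hb α h]
      · have h1 := Dst_le hn p hp α t h
        have h2 : Real.exp ((1 - qExp p α) * t) ≤ Real.exp T * (∏ j, Rad p T j ^ α j) ^ 2 := by
          calc Real.exp ((1 - qExp p α) * t) ≤ Real.exp ((1 - qExp p α) * T) :=
                Real.exp_le_exp.mpr (mul_le_mul_of_nonpos_left ht (by linarith))
            _ = Real.exp T * Real.exp (-qExp p α * T) := by rw [← Real.exp_add]; congr 1; ring
            _ ≤ _ := by
              gcongr
              exact exp_q_le p hp α T (by linarith)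
        have h3 := Cst_mul_q_le p hp α
        have h4 : 0 ≤ Cst α * qExp p α := (mul_pos (Cst_pos α) (qExp_pos hn p hp α)).le
        calc ‖b α‖ ^ 2 * Dst p α t
            ≤ ‖b α‖ ^ 2 * ((Real.pi ^ n * ∑ j, 1 / p j) *
              (Real.exp T * (∏ j, Rad p T j ^ α j) ^ 2)) := by
              refine mul_le_mul_of_nonneg_left (h1.trans ?_) (by positivity)
              exact mul_le_mul h3 h2 (Real.exp_pos _).le (h4.trans h3)
          _ = B α := by rw [hB]; ring
    set s : Set (Fin n → ℕ) := {α | qExp p α = 1} with hs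
    set g : (Fin n → ℕ) → ℝ := s.indicator fun α => ‖b α‖ ^ 2 * Cst α with hg
    have hg0 : ∀ α, 0 ≤ g α := fun α =>
      Set.indicator_nonneg (fun α _ => mul_nonneg (by positivity) (Cst_pos α).le) α
    have hlim : ∀ α, Tendsto (fun t => ‖b α‖ ^ 2 * Dst p α t) atTop (nhds (g α)) := by
      intro α
      rcases lt_trichotomy (qExp p α) 1 with h | h | h
      · have : g α = 0 := by simp [hg, hb α h]
        rw [this]; simp [hb α h]
      · have : g α = ‖b α‖ ^ 2 * Cst α := Set.indicator_of_mem (s := s) h _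
        rw [this]; simp [Dst_eq_one p α _ h]
      · have : g α = 0 := Set.indicator_of_notMem (s := s) (fun hh2 => h.ne (Eq.symm hh2)) _
        rw [this]
        simpa using (tendsto_D hn p hp α h).const_mul (‖b α‖ ^ 2)
    have hev : ∀ᶠ t : ℝ in atTop, ∀ α, ‖‖b α‖ ^ 2 * Dst p α t‖ ≤ B α := by
      filter_upwards [eventually_ge_atTop T] with t ht α
      rw [Real.norm_of_nonneg (mul_nonneg (by positivity) (Dst_nonneg hn p hp α t))]
      exact hbound t ht α
    have htann := tendsto_tsum_of_dominated_convergence hB_sum hlim hev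
    have hgs : Summable g := hB_sum.of_nonneg_of_le hg0 fun α =>
      le_of_tendsto (hlim α) (by
        filter_upwards [eventually_ge_atTop T] with t ht
        exact hbound t ht α)
    have heq : (∑' α : {α : Fin n → ℕ // qExp p α = 1},
          ENNReal.ofReal (‖b α.1‖ ^ 2 * Real.pi ^ n / ∏ j, ((α.1 j : ℝ) + 1)))
        = ENNReal.ofReal (∑' α, g α) := by
      rw [ENNReal.ofReal_tsum_of_nonneg hg0 hgs]
      have h1 := tsum_subtype s (fun α : Fin n → ℕ =>
        ENNReal.ofReal (‖b α‖ ^ 2 * Real.pi ^ n / ∏ j, ((α j : ℝ) + 1)))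
      refine h1.trans (tsum_congr fun α => ?_)
      by_cases h : α ∈ s
      · simp only [hg, Set.indicator_of_mem h, Cst, mul_div_assoc]
      · simp only [hg, Set.indicator_of_notMem h, ENNReal.ofReal_zero]
    rw [heq]
    refine ⟨ENNReal.ofReal_lt_top, ?_⟩
    refine (ENNReal.tendsto_ofReal htann).congr' ?_
    filter_upwards [eventually_ge_atTop T] with t ht
    obtain ⟨S, hS1, hS2⟩ := hS t ht
    rw [hS2, hS1.tsum_eq]
  refine ⟨⟨fun hlim α hα => ?_, fun hb => ?_⟩, fun hb => (hmain hb).2⟩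
  · by_contra hne
    have htop : Tendsto (fun t : ℝ => ∫⁻ w in shell p t,
            ENNReal.ofReal (‖f w‖ ^ 2 * Real.exp (-psi p w))) atTop (nhds ⊤) := by
      have h1 : Tendsto (fun t => ‖b α‖ ^ 2 * Dst p α t) atTop atTop :=
        (tendsto_D_top hn p hp α hα).const_mul_atTop (by positivity)
      have h2 := ENNReal.tendsto_ofReal_atTop.comp h1
      refine tendsto_nhds_top_mono h2 ?_
      filter_upwards [eventually_ge_atTop (t₀ + 1)] with t ht
      obtain ⟨S, hS1, hS2⟩ := hS t ht
      rw [hS2]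
      refine ENNReal.ofReal_le_ofReal (le_hasSum hS1 α fun β _ =>
        mul_nonneg (by positivity) (Dst_nonneg hn p hp β t))
    rw [htop.limsup_eq] at hlim
    exact lt_irrefl _ hlim
  · rw [(hmain hb).2.limsup_eq]
    exact (hmain hb).1
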